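/- Let 𝔐 be a Γ-ring satisfying conditions (i)–(iv). Then any multiplicative derivation d of 𝔐 — i.e., a map d : 𝔐 → 𝔐 with d(xγy) = d(x)γy + xγd(y) for all x, y ∈ 𝔐 and γ ∈ Γ — is additive: d(x + y) = d(x) + d(y) for all x, y ∈ 𝔐. -/

import Mathlib

/-!
Additivity is studied through the defect `D(x, y) = d (x + y) - d x - d y`. The Leibniz rule makes
`D` equivariant on both sides, `z γ D(x, y) = D(z γ x, z γ y)` and `D(x, y) γ z = D(x γ z, y γ z)`,
and the faithfulness conditions (ii) and (iii) extend this to the maps `f_a`, `f'_a`, which act as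
multiplication by the missing element `1 - e_a`. So the Peirce components of a defect are defects
of Peirce components. In particular `D(x, y) = 0` as soon as `x` and `y` lie in complementary
one-sided Peirce components.

The central step is `D(s, t) = 0` for `s, t` in the component `e M (1 - e)` (more generally, for
`s` in `M (1 - e)` and `t` in `e M`): formally
`s + t = (e + s) ((1 - e) + t)`, and both factors are sums of elements in complementary components,
on which `d` is additive. To make sense of `1 - e`, this is applied to
`s γ m + t γ m = (e + s) γ_a (f_a(γ, m) + t γ m)`, and (ii) removes `γ m`.
By (iv) the component `e M e` is reduced to `e M (1 - e)`, and by (iii) all of `M` to `e M`.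
-/

/-- A `Γ`-ring in the sense of Barnes: abelian groups `M` and `Γ` with a triple product
`M → Γ → M → M` that is additive in each variable and associative. -/
structure GammaRing (M : Type*) (Γ : Type*) [AddCommGroup M] [AddCommGroup Γ] where
  tri : M → Γ → M → M
  add_left : ∀ x y α z, tri (x + y) α z = tri x α z + tri y α z
  add_right : ∀ x α y z, tri x α (y + z) = tri x α y + tri x α z
  add_mid : ∀ x α β y, tri x (α + β) y = tri x α y + tri x β y
  assoc : ∀ x α y β z, tri (tri x α y) β z = tri x α (tri y β z)

namespace GammaRing

variable {M Γ : Type*} [AddCommGroup M] [AddCommGroup Γ]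

/-- The product `x₀ γ₀ x₁ γ₁ ⋯ γ_{k-1} x_k` (right associated). -/
def prodF (G : GammaRing M Γ) : (k : ℕ) → (Fin (k + 1) → M) → (Fin k → Γ) → M
  | 0, x, _ => x 0
  | k + 1, x, γ => G.tri (x 0) (γ 0) (G.prodF k (fun i => x i.succ) (fun i => γ i.succ))

end GammaRing

namespace GammaRing

variable {M Γ : Type*} [AddCommGroup M] [AddCommGroup Γ]

theorem tri_zero (G : GammaRing M Γ) (x : M) (α : Γ) : G.tri x α 0 = 0 := by
  have h := G.add_right x α 0 0
  simpa using h

theorem zero_tri (G : GammaRing M Γ) (α : Γ) (x : M) : G.tri 0 α x = 0 := by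
  have h := G.add_left 0 0 α x
  simpa using h

theorem tri_sub (G : GammaRing M Γ) (x : M) (α : Γ) (y z : M) :
    G.tri x α (y - z) = G.tri x α y - G.tri x α z := by
  have h := G.add_right x α (y - z) z
  rw [sub_add_cancel] at h
  rw [h, add_sub_cancel_right]

theorem sub_tri (G : GammaRing M Γ) (x y : M) (α : Γ) (z : M) :
    G.tri (x - y) α z = G.tri x α z - G.tri y α z := by
  have h := G.add_left (x - y) y α z
  rw [sub_add_cancel] at h
  rw [h, add_sub_cancel_right]

/-- The defect of additivity `d (x + y) - d x - d y` of a map `d`. -/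
def defect (d : M → M) (x y : M) : M := d (x + y) - d x - d y

theorem defect_tri (G : GammaRing M Γ) {d : M → M}
    (hd : ∀ (x : M) (γ : Γ) (y : M), d (G.tri x γ y) = G.tri (d x) γ y + G.tri x γ (d y))
    (x y : M) (γ : Γ) (z : M) :
    G.tri (defect d x y) γ z = defect d (G.tri x γ z) (G.tri y γ z) := by
  simp only [defect, sub_tri, ← G.add_left, hd]
  simp only [G.add_left]
  abel

theorem tri_defect (G : GammaRing M Γ) {d : M → M}
    (hd : ∀ (x : M) (γ : Γ) (y : M), d (G.tri x γ y) = G.tri (d x) γ y + G.tri x γ (d y))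
    (x y : M) (γ : Γ) (z : M) :
    G.tri z γ (defect d x y) = defect d (G.tri z γ x) (G.tri z γ y) := by
  simp only [defect, tri_sub, ← G.add_right, hd]
  simp only [G.add_right]
  abel

end GammaRing

/-- Any multiplicative derivation of a `Γ`-ring satisfying (i)-(iv) is additive. -/
theorem gammaRing_mulDer_additive
    {M Γ Λ : Type*} [AddCommGroup M] [AddCommGroup Γ] [Nonempty Λ]
    (G : GammaRing M Γ)
    (e : Λ → M) (γs : Λ → Γ)
    (hidem : ∀ a, G.tri (e a) (γs a) (e a) = e a)
    -- condition (i)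
    (F : Λ → Γ → M → M) (F' : Λ → M → Γ → M)
    (hFadd : ∀ a γ x y, F a γ (x + y) = F a γ x + F a γ y)
    (hF'add : ∀ a x y γ, F' a (x + y) γ = F' a x γ + F' a y γ)
    (hFγ : ∀ a x, F a (γs a) x = x - G.tri (e a) (γs a) x)
    (hF'γ : ∀ a x, F' a x (γs a) = x - G.tri x (γs a) (e a))
    (hFmid : ∀ a x y β γ, G.tri (F' a x β) γ y = G.tri x β (F a γ y))
    -- condition (ii)
    (hii : ∀ x : M, (∀ (γ : Γ) (m : M), G.tri x γ m = 0) → x = 0)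
    -- condition (iii)
    (hiii : ∀ x : M, (∀ (a : Λ) (γ δ : Γ) (m : M), G.tri (G.tri (e a) γ m) δ x = 0) → x = 0)
    -- condition (iv)
    (hiv : ∀ (a : Λ) (x : M),
      (∀ (γ δ : Γ) (m : M),
        F' a (G.tri (G.tri (G.tri (e a) (γs a) x) (γs a) (e a)) γ m) δ = 0) →
      G.tri (G.tri (e a) (γs a) x) (γs a) (e a) = 0)
    (d : M → M)
    (hd : ∀ (x : M) (γ : Γ) (y : M),
      d (G.tri x γ y) = G.tri (d x) γ y + G.tri x γ (d y)) :
    ∀ x y : M, d (x + y) = d x + d y := by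
  have d0 : d 0 = 0 := by
    have h := hd 0 0 0
    simpa only [G.tri_zero, G.zero_tri, add_zero] using h
  have D0l : ∀ x, GammaRing.defect d 0 x = 0 := fun x => by simp [GammaRing.defect, d0]
  have D0r : ∀ x, GammaRing.defect d x 0 = 0 := fun x => by simp [GammaRing.defect, d0]
  have add_of_defect : ∀ {x y}, GammaRing.defect d x y = 0 → d (x + y) = d x + d y := by
    intro x y h
    rw [GammaRing.defect, sub_sub] at h
    exact sub_eq_zero.mp h
  have Dr := G.defect_tri hd
  have Dl := G.tri_defect hd
  have right_ext : ∀ x y : M, (∀ γ m, G.tri x γ m = G.tri y γ m) → x = y := by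
    intro x y h
    refine sub_eq_zero.mp (hii _ fun γ m => ?_)
    rw [G.sub_tri, h, sub_self]
  have left_ext : ∀ x y : M, (∀ z γ, G.tri z γ x = G.tri z γ y) → x = y := by
    intro x y h
    refine sub_eq_zero.mp (hiii _ fun a γ δ m => ?_)
    rw [G.tri_sub, h, sub_self]
  have DF' : ∀ a x y β, F' a (GammaRing.defect d x y) β
      = GammaRing.defect d (F' a x β) (F' a y β) := by
    intro a x y β
    refine right_ext _ _ fun γ z => ?_
    rw [hFmid, Dr, Dr, hFmid, hFmid]
  have DF : ∀ a x y γ, F a γ (GammaRing.defect d x y)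
      = GammaRing.defect d (F a γ x) (F a γ y) := by
    intro a x y γ
    refine left_ext _ _ fun z β => ?_
    rw [← hFmid, Dl, Dl, hFmid, hFmid]
  have F'_tri_e : ∀ a x β, G.tri (F' a x β) (γs a) (e a) = 0 := by
    intro a x β
    rw [hFmid, hFγ, hidem, sub_self, G.tri_zero]
  have e_tri_F : ∀ a γ m, G.tri (e a) (γs a) (F a γ m) = 0 := by
    intro a γ m
    rw [← hFmid, hF'γ, hidem, sub_self, G.zero_tri]
  have tri_F' : ∀ a z γ x β, G.tri z γ (F' a x β) = F' a (G.tri z γ x) β := by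
    intro a z γ x β
    refine right_ext _ _ fun δ m => ?_
    rw [G.assoc, hFmid, hFmid, G.assoc]
  -- The defect vanishes for `s` in `M (1 - e)` and `t` in `e M`, in particular on `e M (1 - e)`.
  have D12 : ∀ a s t, G.tri s (γs a) (e a) = 0 →
      G.tri (e a) (γs a) t = t → GammaRing.defect d s t = 0 := by
    intro a s t hse ht
    refine hii _ fun γ m => ?_
    have hsz : G.tri s (γs a) (F a γ m) = G.tri s γ m := by
      rw [← hFmid, hF'γ, hse, sub_zero]
    have hE : G.tri (e a) (γs a) (G.tri t γ m) = G.tri t γ m := by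
      rw [← G.assoc, ht]
    have hsE : G.tri s (γs a) (G.tri t γ m) = 0 := by
      rw [← hE, ← G.assoc, hse, G.zero_tri]
    -- `e` and `s` lie in the complementary right components `M e` and `M (1 - e)`.
    have h1 : d (e a + s) = d (e a) + d s := by
      apply add_of_defect
      have hr : G.tri (GammaRing.defect d (e a) s) (γs a) (e a) = 0 := by
        rw [Dr, hse, D0r]
      have h := hF'γ a (GammaRing.defect d (e a) s)
      rw [DF', hr, hF'γ a (e a), hidem, sub_self, D0l, sub_zero] at h
      exact h.symm
    -- `f_a(γ, m)` and `t γ m` lie in the complementary left components `(1 - e) M` and `e M`.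
    have h2 : d (F a γ m + G.tri t γ m) = d (F a γ m) + d (G.tri t γ m) := by
      apply add_of_defect
      have hl : G.tri (e a) (γs a) (GammaRing.defect d (F a γ m) (G.tri t γ m)) = 0 := by
        rw [Dl, e_tri_F, D0l]
      have h := hFγ a (GammaRing.defect d (F a γ m) (G.tri t γ m))
      rw [DF, hl, hFγ a (G.tri t γ m), hE, sub_self, D0r, sub_zero] at h
      exact h.symm
    have hprod : G.tri s γ m + G.tri t γ m
        = G.tri (e a + s) (γs a) (F a γ m + G.tri t γ m) := by
      simp only [G.add_left, G.add_right, e_tri_F, hE, hsz, hsE]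
      abel
    have e1 := hd (e a) (γs a) (F a γ m)
    have e2 := hd (e a) (γs a) (G.tri t γ m)
    have e3 := hd s (γs a) (F a γ m)
    have e4 := hd s (γs a) (G.tri t γ m)
    rw [e_tri_F, d0] at e1
    rw [hE] at e2
    rw [hsz] at e3
    rw [hsE, d0] at e4
    have key : d (G.tri s γ m + G.tri t γ m) = d (G.tri s γ m) + d (G.tri t γ m) := by
      refine Eq.trans ?_ (congrArg₂ HAdd.hAdd e3 e2).symm
      rw [hprod, hd, h1, h2]
      simp only [G.add_left, G.add_right]
      rw [eq_neg_of_add_eq_zero_left e1.symm, eq_neg_of_add_eq_zero_left e4.symm]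
      abel
    rw [Dr, GammaRing.defect, key]
    abel
  have DF'0 : ∀ a x y β, G.tri (e a) (γs a) y = y →
      F' a (GammaRing.defect d x y) β = 0 := by
    intro a x y β hy
    rw [DF']
    refine D12 a _ _ (F'_tri_e a x β) ?_
    rw [tri_F', hy]
  have De : ∀ a x y, G.tri (e a) (γs a) x = x → G.tri (e a) (γs a) y = y →
      GammaRing.defect d x y = 0 := by
    intro a x y hx hy
    have heD : G.tri (e a) (γs a) (GammaRing.defect d x y) = GammaRing.defect d x y := by
      rw [Dl, hx, hy]
    have hDe : G.tri (GammaRing.defect d x y) (γs a) (e a) = 0 := by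
      have h := hiv a (GammaRing.defect d x y)
      rw [heD] at h
      refine h fun γ δ m => ?_
      rw [Dr, Dr]
      apply DF'0
      simp only [← G.assoc, hy]
    have h := hF'γ a (GammaRing.defect d x y)
    rw [DF'0 a x y _ hy, hDe, sub_zero] at h
    exact h.symm
  intro x y
  apply add_of_defect
  refine hiii _ fun a γ δ m => ?_
  rw [Dl]
  apply De a
  · simp only [← G.assoc, hidem]
  · simp only [← G.assoc, hidem]
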